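/- Lemma 9: run Algorithm 2 with the Borda rule and k manipulators; let s_ℓ(c) be the total score of candidate c in F(p⃗ ∪ p⃗_M) after stage ℓ of an iteration i, and define the average scores after k−1 stages q(U^i) = (1/|U^i|) Σ_{u ∈ U^i} s_{k−1}(u) and q(D^i) = (1/|D^i|) Σ_{d ∈ D^i} s_{k−1}(d). If for every iteration i (1 ≤ i ≤ ⌈m/2⌉) q(U^i) < q(D^i), then no profile p⃗_m of k−1 manipulative Borda votes satisfies RC(F(p⃗ ∪ p⃗_m), p_o) = {p}; i.e., no manipulation by k−1 manipulators makes p the negotiation result. -/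

import Mathlib

open Finset
open scoped Classical

variable {O : Type*} [Fintype O] [DecidableEq O]

/-- A vote is a strict total order on the outcome set `O`, represented by its position
function: `p o` is the number of outcomes that `o` is preferred over, so the most
preferred outcome has position `m - 1` and the least preferred position `0`. -/
def IsVote (p : O → ℕ) : Prop :=
  Function.Injective p ∧ ∀ o : O, p o < Fintype.card O

/-- The total score of candidate `c` under the scoring vector `sc` (`sc j` is the number
of points awarded to the candidate at position `j`) for the profile `P`. -/
def score (sc : ℕ → ℤ) (P : List (O → ℕ)) (c : O) : ℤ :=
  (P.map fun q => sc (q c)).sum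

/-- The positional scoring rule used as a social welfare function: candidates are ordered
by decreasing total score, ties being broken by the fixed strict tie-breaking order `tb`
(a smaller `tb`-value means preferred by the tie-breaking order).  The output is again a
position function: the position of `c` is the number of candidates ranked below `c`. -/
def swf (sc : ℕ → ℤ) (tb : O → ℕ) (P : List (O → ℕ)) : O → ℕ := fun c =>
  (univ.filter fun c' =>
      score sc P c' < score sc P c ∨ (score sc P c' = score sc P c ∧ tb c < tb c')).card

/-- `topSet p j = A^j(p)`, the set of the `j` most preferred outcomes of `p`. -/
def topSet (p : O → ℕ) (j : ℕ) : Finset O :=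
  univ.filter fun o => Fintype.card O - j ≤ p o

/-- The least `j ≥ 1` for which `A^j(p_t) ∩ A^j(p_o)` is nonempty, i.e. the iteration at
which the Rational Compromise rule terminates. -/
noncomputable def rcIndex (pt po : O → ℕ) : ℕ :=
  sInf {j | 1 ≤ j ∧ (topSet pt j ∩ topSet po j).Nonempty}

/-- The Rational Compromise bargaining rule: `A^j(p_t) ∩ A^j(p_o)` for the least `j ≥ 1`
making this intersection nonempty. -/
noncomputable def RC (pt po : O → ℕ) : Finset O :=
  topSet pt (rcIndex pt po) ∩ topSet po (rcIndex pt po)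

/-- The `n` most preferred members of `S` according to the ranking `r`. -/
def topWithin (r : O → ℕ) (S : Finset O) (n : ℕ) : Finset O :=
  S.filter fun o => (S.filter fun o' => r o < r o').card < n

/-- The `n` least preferred members of `S` according to the ranking `r`. -/
def botWithin (r : O → ℕ) (S : Finset O) (n : ℕ) : Finset O :=
  S.filter fun o => (S.filter fun o' => r o' < r o).card < n

/-- The vote built by the algorithms from a current ranking `r` and a set `H`:
the members of `H` occupy the `|H|` highest positions in reverse order of `r`
(the `r`-least preferred member of `H` is placed highest), and the members of `O ∖ H`
occupy the remaining lowest positions in reverse order of `r` (the `r`-most preferred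
of them is placed lowest). -/
def buildVote (r : O → ℕ) (H : Finset O) : O → ℕ := fun o =>
  if o ∈ H then Fintype.card O - H.card + (H.filter fun h => r o < r h).card
  else (univ.filter fun c => c ∉ H ∧ r o < r c).card

/-- `H^i` for the constructive algorithms: the preferred outcome `p` together with the
`i - 1` most preferred outcomes of `p_t` that do not belong to `A^i(p_o)`. -/
def Hset (pt po : O → ℕ) (p : O) (i : ℕ) : Finset O :=
  insert p (topWithin pt ((univ \ topSet po i).erase p) (i - 1))

/-- `H^i` for the destructive algorithms: `p*`, the most preferred outcome of `p_t` other
than `e` that belongs to `A^i(p_o)`, together with the `i - 1` most preferred outcomes of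
`p_t` other than `e` and `p*`. -/
def HsetD (pt po : O → ℕ) (e : O) (i : ℕ) : Finset O :=
  topWithin pt ((topSet po i).erase e) 1 ∪
    topWithin pt ((univ.erase e) \ topWithin pt ((topSet po i).erase e) 1) (i - 1)

/-- The manipulator profile built by Algorithm 2 (for a fixed iteration whose set is `H`)
after the given number of stages: at each stage one more vote is appended, built from the
current social ranking `F(p⃗ ∪ p⃗_M)`. -/
def stageProfile (sc : ℕ → ℤ) (tb : O → ℕ) (P : List (O → ℕ)) (H : Finset O) :
    ℕ → List (O → ℕ)
  | 0 => []
  | n + 1 =>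
      stageProfile sc tb P H n ++
        [buildVote (swf sc tb (P ++ stageProfile sc tb P H n)) H]

/-- The vote constructed by Algorithm 2 at stage `ℓ` (1-indexed). -/
def stageVote (sc : ℕ → ℤ) (tb : O → ℕ) (P : List (O → ℕ)) (H : Finset O) (ℓ : ℕ) :
    O → ℕ :=
  buildVote (swf sc tb (P ++ stageProfile sc tb P H (ℓ - 1))) H

/-- The sets `U^i_s`:  `U^i_0` consists of the member of `H^i` with the lowest position in
`p_t`, and `U^i_{s+1}` adds every candidate ranked above some member of `U^i_s` by the
stage-`l` vote (`1 ≤ l < k`) but below some member of `U^i_s` by the stage-`(l+1)` vote. -/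
noncomputable def Uaux (sc : ℕ → ℤ) (tb : O → ℕ) (P : List (O → ℕ)) (pt : O → ℕ)
    (H : Finset O) (k : ℕ) : ℕ → Finset O
  | 0 => botWithin pt H 1
  | s + 1 =>
      Uaux sc tb P pt H k s ∪
        univ.filter fun u =>
          ∃ l, 1 ≤ l ∧ l < k ∧
            (∃ u' ∈ Uaux sc tb P pt H k s,
              stageVote sc tb P H l u' < stageVote sc tb P H l u) ∧
            (∃ u' ∈ Uaux sc tb P pt H k s,
              stageVote sc tb P H (l + 1) u < stageVote sc tb P H (l + 1) u')

/-- `U^i = ⋃ₛ U^i_s`. -/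
noncomputable def Uset (sc : ℕ → ℤ) (tb : O → ℕ) (P : List (O → ℕ)) (pt : O → ℕ)
    (H : Finset O) (k : ℕ) : Finset O :=
  univ.filter fun u => ∃ s, u ∈ Uaux sc tb P pt H k s

/-- The sets `D^i_s`: `D^i_0` consists of the member of `O ∖ H^i` with the highest position
in `p_t`, and `D^i_{s+1}` adds every candidate ranked below some member of `D^i_s` by the
stage-`l` vote (`1 ≤ l < k`) but above some member of `D^i_s` by the stage-`(l+1)` vote. -/
noncomputable def Daux (sc : ℕ → ℤ) (tb : O → ℕ) (P : List (O → ℕ)) (pt : O → ℕ)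
    (H : Finset O) (k : ℕ) : ℕ → Finset O
  | 0 => topWithin pt (univ \ H) 1
  | s + 1 =>
      Daux sc tb P pt H k s ∪
        univ.filter fun d =>
          ∃ l, 1 ≤ l ∧ l < k ∧
            (∃ d' ∈ Daux sc tb P pt H k s,
              stageVote sc tb P H l d < stageVote sc tb P H l d') ∧
            (∃ d' ∈ Daux sc tb P pt H k s,
              stageVote sc tb P H (l + 1) d' < stageVote sc tb P H (l + 1) d)

/-- `D^i = ⋃ₛ D^i_s`. -/
noncomputable def Dset (sc : ℕ → ℤ) (tb : O → ℕ) (P : List (O → ℕ)) (pt : O → ℕ)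
    (H : Finset O) (k : ℕ) : Finset O :=
  univ.filter fun d => ∃ s, d ∈ Daux sc tb P pt H k s

/-- The Borda scoring vector `(m-1, m-2, …, 1, 0)`: position `j` gets `j` points. -/
def bordaVec : ℕ → ℤ := fun j => (j : ℤ)

/-- The `x`-approval scoring vector for `m` candidates: the `x` highest positions get one
point, the rest get zero. -/
def approvalVec (m x : ℕ) : ℕ → ℤ := fun j => if m ≤ j + x then 1 else 0

/-- `sc` is a scoring vector for `m` candidates: `s_{m-1} ≥ … ≥ s_0 ≥ 0` and
`s_{m-1} > s_0`. -/
def IsScoringVector (m : ℕ) (sc : ℕ → ℤ) : Prop :=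
  (∀ j, j + 1 < m → sc j ≤ sc (j + 1)) ∧ 0 ≤ sc 0 ∧ sc 0 < sc (m - 1)

/-- Algorithm 1 (constructive single-voter manipulation) returns the vote `pa`:
the guard `pos(p, p_o) ≥ ⌈m/2⌉` holds and `pa` is the vote built at the first iteration
`i ∈ {1, …, ⌈m/2⌉}` at which the manipulation check succeeds. -/
def alg1Returns (sc : ℕ → ℤ) (tb : O → ℕ) (P : List (O → ℕ)) (po : O → ℕ) (p : O)
    (pa : O → ℕ) : Prop :=
  (Fintype.card O + 1) / 2 ≤ po p ∧
    ∃ i, 1 ≤ i ∧ i ≤ (Fintype.card O + 1) / 2 ∧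
      pa = buildVote (swf sc tb P) (Hset (swf sc tb P) po p i) ∧
      RC (swf sc tb (P ++ [pa])) po = {p} ∧
      ∀ j, 1 ≤ j → j < i →
        RC (swf sc tb (P ++ [buildVote (swf sc tb P) (Hset (swf sc tb P) po p j)])) po ≠
          {p}

/-- Algorithm 2 (constructive coalitional manipulation) run with `k` manipulators returns
the profile `PM`: the guard `pos(p, p_o) ≥ ⌈m/2⌉` holds and `PM` is the `k`-stage profile
built at the first iteration `i ∈ {1, …, ⌈m/2⌉}` at which the manipulation check succeeds. -/
def alg2Returns (sc : ℕ → ℤ) (tb : O → ℕ) (P : List (O → ℕ)) (po : O → ℕ) (p : O)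
    (k : ℕ) (PM : List (O → ℕ)) : Prop :=
  (Fintype.card O + 1) / 2 ≤ po p ∧
    ∃ i, 1 ≤ i ∧ i ≤ (Fintype.card O + 1) / 2 ∧
      PM = stageProfile sc tb P (Hset (swf sc tb P) po p i) k ∧
      RC (swf sc tb (P ++ PM)) po = {p} ∧
      ∀ j, 1 ≤ j → j < i →
        RC (swf sc tb (P ++ stageProfile sc tb P (Hset (swf sc tb P) po p j) k)) po ≠ {p}

/-- The modified Algorithm 1 (destructive single-voter manipulation) returns the vote
`pa`: the guard `pos(e, p_o) < ⌊m/2⌋` fails and `pa` is the vote built at the first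
iteration `i ∈ {1, …, ⌈m/2⌉}` at which `e` is excluded from the Rational Compromise. -/
def alg1ReturnsD (sc : ℕ → ℤ) (tb : O → ℕ) (P : List (O → ℕ)) (po : O → ℕ) (e : O)
    (pa : O → ℕ) : Prop :=
  Fintype.card O / 2 ≤ po e ∧
    ∃ i, 1 ≤ i ∧ i ≤ (Fintype.card O + 1) / 2 ∧
      pa = buildVote (swf sc tb P) (HsetD (swf sc tb P) po e i) ∧
      e ∉ RC (swf sc tb (P ++ [pa])) po ∧
      ∀ j, 1 ≤ j → j < i →
        e ∈ RC (swf sc tb (P ++ [buildVote (swf sc tb P) (HsetD (swf sc tb P) po e j)])) po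

/-- The modified Algorithm 2 (destructive coalitional manipulation) run with `k`
manipulators returns the profile `PM`: the guard `pos(e, p_o) < ⌊m/2⌋` fails and `PM` is
the `k`-stage profile built at the first iteration `i ∈ {1, …, ⌈m/2⌉}` at which `e` is
excluded from the Rational Compromise. -/
def alg2ReturnsD (sc : ℕ → ℤ) (tb : O → ℕ) (P : List (O → ℕ)) (po : O → ℕ) (e : O)
    (k : ℕ) (PM : List (O → ℕ)) : Prop :=
  Fintype.card O / 2 ≤ po e ∧
    ∃ i, 1 ≤ i ∧ i ≤ (Fintype.card O + 1) / 2 ∧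
      PM = stageProfile sc tb P (HsetD (swf sc tb P) po e i) k ∧
      e ∉ RC (swf sc tb (P ++ PM)) po ∧
      ∀ j, 1 ≤ j → j < i →
        e ∈ RC (swf sc tb (P ++ stageProfile sc tb P (HsetD (swf sc tb P) po e j) k)) po

/-- The set `U^i` arising from running the `k` stages of Algorithm 2 at iteration `i`. -/
noncomputable def UsetAlg (sc : ℕ → ℤ) (tb : O → ℕ) (P : List (O → ℕ)) (po : O → ℕ)
    (p : O) (i k : ℕ) : Finset O :=
  Uset sc tb P (swf sc tb P) (Hset (swf sc tb P) po p i) k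

/-- The set `D^i` arising from running the `k` stages of Algorithm 2 at iteration `i`. -/
noncomputable def DsetAlg (sc : ℕ → ℤ) (tb : O → ℕ) (P : List (O → ℕ)) (po : O → ℕ)
    (p : O) (i k : ℕ) : Finset O :=
  Dset sc tb P (swf sc tb P) (Hset (swf sc tb P) po p i) k

/-- The vote constructed at stage `ℓ` of iteration `i` of Algorithm 2. -/
def stageVoteAlg (sc : ℕ → ℤ) (tb : O → ℕ) (P : List (O → ℕ)) (po : O → ℕ)
    (p : O) (i ℓ : ℕ) : O → ℕ :=
  stageVote sc tb P (Hset (swf sc tb P) po p i) ℓ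

/-- `s_ℓ(c)`: the total score of candidate `c` in `F(p⃗ ∪ p⃗_M)` after stage `ℓ` of
iteration `i` of Algorithm 2. -/
def stageScoreAlg (sc : ℕ → ℤ) (tb : O → ℕ) (P : List (O → ℕ)) (po : O → ℕ)
    (p : O) (i ℓ : ℕ) (c : O) : ℤ :=
  score sc (P ++ stageProfile sc tb P (Hset (swf sc tb P) po p i) ℓ) c

/-- `F(p⃗ ∪ p⃗_M)` after stage `ℓ` of iteration `i` of Algorithm 2. -/
def stageSwfAlg (sc : ℕ → ℤ) (tb : O → ℕ) (P : List (O → ℕ)) (po : O → ℕ)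
    (p : O) (i ℓ : ℕ) : O → ℕ :=
  swf sc tb (P ++ stageProfile sc tb P (Hset (swf sc tb P) po p i) ℓ)

/-!
Suppose a coalition `Q` of `k - 1` voters lifts a set `G` of `|H^i|` outcomes to the top.  Initially
the members of `H^i ∖ G` score at least as much as those of `G ∖ H^i`, so `U^i` and `D^i` can be
exchanged for sets `U' ⊆ G` and `D' ⊆ O ∖ G` of the same sizes whose initial scores are in total no
higher and no lower, respectively.  Every member of `U'` ends at least as high as every member of
`D'`.  If each of the first `k - 1` votes of the algorithm places `U^i` on top and `D^i` at the
bottom, then it gives `U^i` at least and `D^i` at most the points that any vote gives `U'` and `D'`,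
so the averages satisfy `q(D^i) ≤ q(D') ≤ q(U') ≤ q(U^i)`.

That `U^i` is on top rests on a rebound: when candidates receive points in reverse order of their
scores, two neighbours that swap end up less than one point apart.  The next vote again reverses the
order and separates any two candidates by at least one point, so it swaps every pair that lies
between these neighbours.  Hence if an outcome outside `U^i` overtook a member of `U^i` in a vote,
some outcome outside `U^i` would fall back behind a member of `U^i` in the next vote, and the
closure rule would have put it into `U^i`.  The set `D^i` is treated by reversing all rankings.
-/

section Ranks

variable {α : Type*}

theorem image_eq_range_of_injOn {S : Finset α} {ρ : α → ℕ} (hinj : Set.InjOn ρ S)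
    (hlt : ∀ x ∈ S, ρ x < #S) : S.image ρ = range #S :=
  eq_of_subset_of_card_le (by simpa [subset_iff] using hlt) (by simp [card_image_of_injOn hinj])

theorem card_filter_comp_of_injOn {S : Finset α} {ρ : α → ℕ} (hinj : Set.InjOn ρ S)
    (hlt : ∀ x ∈ S, ρ x < #S) (p : ℕ → Prop) [DecidablePred p] :
    #{x ∈ S | p (ρ x)} = #{j ∈ range #S | p j} := by
  rw [← image_eq_range_of_injOn hinj hlt, filter_image,
    card_image_of_injOn (hinj.mono (filter_subset _ _))]

variable {β : Type*} [LinearOrder β]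

/-- The number of members of `S` with a larger `f`-value than `x`, i.e. the rank of `x` in `S`
counted from the top.  The social ranking, the votes of Algorithm 2 and the sets `topWithin` are
all given by such numbers. -/
def numAbove (S : Finset α) (f : α → β) (x : α) : ℕ := #{y ∈ S | f x < f y}

theorem numAbove_lt_card {S : Finset α} {x : α} (f : α → β) (hx : x ∈ S) :
    numAbove S f x < #S :=
  card_lt_card (filter_ssubset.2 ⟨x, hx, lt_irrefl _⟩)

theorem numAbove_le_numAbove (S : Finset α) {f : α → β} {x y : α} (h : f x ≤ f y) :
    numAbove S f y ≤ numAbove S f x :=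
  card_le_card (monotone_filter_right S fun _ _ => h.trans_lt)

theorem numAbove_lt_numAbove {S : Finset α} {f : α → β} {x y : α} (hy : y ∈ S) (h : f x < f y) :
    numAbove S f y < numAbove S f x :=
  card_lt_card ((ssubset_iff_of_subset (monotone_filter_right S fun _ _ => h.trans)).2
    ⟨y, by simp [hy, h]⟩)

theorem numAbove_lt_iff {S : Finset α} {f : α → β} {x y : α} (hy : y ∈ S) :
    numAbove S f y < numAbove S f x ↔ f x < f y :=
  ⟨fun h => not_le.1 fun hle => (numAbove_le_numAbove S hle).not_gt h, numAbove_lt_numAbove hy⟩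

theorem injOn_numAbove {S : Finset α} {f : α → β} (hf : Set.InjOn f S) :
    Set.InjOn (numAbove S f) S := fun _ hx _ hy hxy =>
  hf hx hy <| le_antisymm
    (not_lt.1 fun h => (numAbove_lt_numAbove hx h).ne hxy)
    (not_lt.1 fun h => (numAbove_lt_numAbove hy h).ne hxy.symm)

theorem numAbove_le_numAbove_add_one {S : Finset α} {f : α → β} (hf : Set.InjOn f S) {x y : α}
    (hy : y ∈ S) (hxy : ∀ z ∈ S, f z ≤ f x ∨ f y ≤ f z) :
    numAbove S f x ≤ numAbove S f y + 1 := by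
  classical
  refine (card_le_card fun z hz => ?_).trans (card_insert_le y {z ∈ S | f y < f z})
  obtain ⟨hzS, hxz⟩ := mem_filter.1 hz
  rw [mem_insert, mem_filter]
  rcases ((hxy z hzS).resolve_left hxz.not_ge).eq_or_lt with heq | hlt
  · exact .inl (hf hzS hy heq.symm)
  · exact .inr ⟨hzS, hlt⟩

theorem exists_adjacent {S : Finset α} {p : α → Prop} {x y : α} (f : α → β) (hx : x ∈ S)
    (hy : y ∈ S) (hpx : ¬ p x) (hpy : p y) (hxy : f x < f y) :
    ∃ s ∈ S, ∃ t ∈ S, ¬ p s ∧ p t ∧ f x ≤ f s ∧ f s < f t ∧ f t ≤ f y ∧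
      ∀ z ∈ S, f z ≤ f s ∨ f t ≤ f z := by
  classical
  obtain ⟨t, ht, htmin⟩ := exists_min_image {z ∈ S | p z ∧ f x < f z} f
    ⟨y, by simp [hy, hpy, hxy]⟩
  simp only [mem_filter] at ht htmin
  obtain ⟨s, hs, hsmax⟩ := exists_max_image {z ∈ S | ¬ p z ∧ f z < f t} f
    ⟨x, by simp [hx, hpx, ht.2.2]⟩
  simp only [mem_filter] at hs hsmax
  have hxs : f x ≤ f s := hsmax x ⟨hx, hpx, ht.2.2⟩
  refine ⟨s, hs.1, t, ht.1, hs.2.1, ht.2.1, hxs, hs.2.2, htmin y ⟨hy, hpy, hxy⟩, fun z hz => ?_⟩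
  by_contra! hz'
  by_cases hpz : p z
  · exact (htmin z ⟨hz, hpz, hxs.trans_lt hz'.1⟩).not_gt hz'.2
  · exact (hsmax z ⟨hz, hpz, hz'.2⟩).not_gt hz'.1

end Ranks

section ReverseDynamics

variable {α G : Type*} [AddCommGroup G] [LinearOrder G]

/-- `b` arises from `a` by giving each member of `S`, up to a constant `C` common to all of them,
`e` times the number of members that it is behind: the effect on the scores of one Borda vote
listing `S` in reverse order of the scores `a`. -/
def ReverseStep (S : Finset α) (e C : G) (a b : α → G) : Prop :=
  ∀ x ∈ S, b x = a x + numAbove S a x • e + C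

variable [IsOrderedAddMonoid G] {S : Finset α} {e C C' : G} {a b c : α → G}

theorem ReverseStep.lt_add (h : ReverseStep S e C a b) (he : 0 ≤ e) (ha : Set.InjOn a S)
    {x y : α} (hx : x ∈ S) (hy : y ∈ S) (hlt : a x < a y)
    (hxy : ∀ z ∈ S, a z ≤ a x ∨ a y ≤ a z) : b x < b y + e := by
  have hn : numAbove S a x • e ≤ numAbove S a y • e + e := by
    simpa only [succ_nsmul] using
      nsmul_le_nsmul_left he (numAbove_le_numAbove_add_one ha hy hxy)
  rw [h x hx, h y hy]
  grind

theorem ReverseStep.add_le (h : ReverseStep S e C b c) (he : 0 ≤ e) {s t : α} (hs : s ∈ S)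
    (ht : t ∈ S) (hlt : b s < b t) : b s + c t + e ≤ b t + c s := by
  have hn : numAbove S b t • e + e ≤ numAbove S b s • e := by
    simpa only [succ_nsmul] using
      nsmul_le_nsmul_left he (Nat.succ_le_of_lt (numAbove_lt_numAbove ht hlt))
  rw [h s hs, h t ht]
  grind

/-- Some `a`-neighbours `x`, `y` separated by `{z | b t ≤ b z}` are swapped by the first step, so
`b x - b y < e`.  Hence every pair that lies between them is swapped by the second step. -/
theorem exists_swap_back (he : 0 ≤ e) (ha : Set.InjOn a S) (hab : ReverseStep S e C a b)
    (hbc : ReverseStep S e C' b c) {p : α → Prop} {u w : α} (hu : u ∈ S) (hw : w ∈ S)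
    (hpu : p u) (hpw : ¬ p w) (hauw : a u < a w) (hbwu : b w < b u) :
    ∃ s ∈ S, ∃ t ∈ S, ¬ p s ∧ p t ∧ b s < b t ∧ c t < c s := by
  obtain ⟨s, hs, t, ht, hps, hpt, hws, hst, htu, hcut⟩ := exists_adjacent b hw hu hpw hpu hbwu
  refine ⟨s, hs, t, ht, hps, hpt, hst, ?_⟩
  obtain ⟨x, hx, y, hy, hbx, hby, -, hxy, -, hadj⟩ :=
    exists_adjacent (p := fun z => ¬ b t ≤ b z) a hu hw (not_not.2 htu)
      (hws.trans_lt hst).not_ge hauw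
  have hlt : b x < b y + e := hab.lt_add he ha hx hy hxy hadj
  have hle : b s + c t + e ≤ b t + c s := hbc.add_le he hs ht hst
  have hys : b y ≤ b s := (hcut y hy).resolve_right hby
  have hts : b t < b s + e := (not_not.1 hbx).trans_lt (hlt.trans_le (by gcongr))
  grind

end ReverseDynamics

section Rebounds

variable {α β : Type*} [LinearOrder β]

/-- The rankings `v 1, v 2, …` rebound if any element of `p` that drops below an element outside
`p` from one ranking to the next entails a crossing of `p` and its complement in the opposite
direction from that next ranking to the one after it. -/
def Rebounds (v : ℕ → α → β) : Prop :=
  ∀ (p : α → Prop) (l : ℕ) (u w : α), 1 ≤ l → p u → ¬ p w →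
    v l w < v l u → v (l + 1) u < v (l + 1) w →
    ∃ s t, ¬ p s ∧ p t ∧ v (l + 1) t < v (l + 1) s ∧ v (l + 2) s < v (l + 2) t

theorem Rebounds.toDual {v : ℕ → α → β} (hv : Rebounds v) :
    Rebounds fun l x => OrderDual.toDual (v l x) := by
  intro p l u w hl hu hw h h'
  obtain ⟨s, t, hs, ht, hst, hst'⟩ := hv (fun x => ¬ p x) l w u hl hw (not_not.2 hu) h h'
  exact ⟨t, s, ht, not_not.1 hs, hst, hst'⟩

/-- The closure `U` of `B` under the rule of the sets `U^i`: an element above some member of `U`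
in the ranking `v l`, `1 ≤ l < k`, but below some member of `U` in `v (l + 1)` belongs to `U`.
The rule of the sets `D^i` is that of the order-dual rankings. -/
inductive CrossClosure (v : ℕ → α → β) (k : ℕ) (B : Finset α) : α → Prop
  | base {x : α} : x ∈ B → CrossClosure v k B x
  | cross {l : ℕ} {x y z : α} : 1 ≤ l → l < k → CrossClosure v k B y → CrossClosure v k B z →
      v l y < v l x → v (l + 1) x < v (l + 1) z → CrossClosure v k B x

namespace CrossClosure

variable {v : ℕ → α → β} {k l : ℕ} {B : Finset α} {x x₀ u : α}

theorem iff_exists_mem_iterate {A : ℕ → Finset α} (hA₀ : A 0 = B)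
    (hA : ∀ n x, x ∈ A (n + 1) ↔ x ∈ A n ∨ ∃ l, 1 ≤ l ∧ l < k ∧
      (∃ y ∈ A n, v l y < v l x) ∧ ∃ z ∈ A n, v (l + 1) x < v (l + 1) z) :
    CrossClosure v k B x ↔ ∃ n, x ∈ A n := by
  have hmono : Monotone A := monotone_nat_of_le_succ fun n x hx => (hA n x).2 (.inl hx)
  constructor
  · intro h
    induction h with
    | base hx => exact ⟨0, hA₀ ▸ hx⟩
    | cross hl hlk _ _ hy hz ihy ihz =>
      obtain ⟨m, hm⟩ := ihy
      obtain ⟨n, hn⟩ := ihz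
      exact ⟨max m n + 1, (hA _ _).2 <| .inr ⟨_, hl, hlk, ⟨_, hmono (le_max_left m n) hm, hy⟩,
        _, hmono (le_max_right m n) hn, hz⟩⟩
  · rintro ⟨n, hn⟩
    induction n generalizing x with
    | zero => exact base (hA₀ ▸ hn)
    | succ n ih =>
      rcases (hA n x).1 hn with hx | ⟨l, hl, hlk, ⟨y, hy, hyx⟩, z, hz, hxz⟩
      · exact ih hx
      · exact cross hl hlk (ih hy) (ih hz) hyx hxz

theorem mem_of_forall_lt {S : Finset α} (h : CrossClosure v k B x) (hB : B ⊆ S)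
    (hS : ∀ l, 1 ≤ l → ∀ x ∉ S, ∀ y ∈ S, v l x < v l y) : x ∈ S := by
  induction h with
  | base hx => exact hB hx
  | @cross l x y _ hl _ _ _ hyx _ ihy _ =>
    by_contra hx
    exact (hS l hl x hx y ihy).not_gt hyx

theorem eq_of_le_two (h : CrossClosure v k {x₀} x) (hk : k ≤ 2) (htop : ∀ x, v 1 x ≤ v 1 x₀) :
    x = x₀ := by
  induction h with
  | base hx => exact mem_singleton.1 hx
  | @cross l x y _ hl hlk _ _ hyx _ ihy _ =>
    obtain rfl : l = 1 := by omega
    exact absurd (ihy ▸ hyx) (htop x).not_gt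

theorem lt_succ_of_rebounds (hv : Rebounds v) (hinj : ∀ l, Function.Injective (v l))
    (hl : 1 ≤ l) (hlk : l + 1 < k) (hu : CrossClosure v k B u) (hx : ¬ CrossClosure v k B x)
    (hxu : v l x < v l u) : v (l + 1) x < v (l + 1) u := by
  by_contra! h
  have hux := h.lt_of_ne fun heq => hx (hinj _ heq ▸ hu)
  obtain ⟨s, t, hs, ht, hst, hst'⟩ := hv _ l u x hl hu hx hxu hux
  exact hs (cross (by omega) hlk ht ht hst hst')

theorem lt_of_not (hv : Rebounds v) (hinj : ∀ l, Function.Injective (v l))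
    (htop : ∀ x, v 1 x ≤ v 1 x₀) (hl : 1 ≤ l) (hlk : l < k) (hu : CrossClosure v k {x₀} u)
    (hx : ¬ CrossClosure v k {x₀} x) : v l x < v l u := by
  have hx₀ : CrossClosure v k {x₀} x₀ := base (mem_singleton_self x₀)
  have hne {l y z} (hy : CrossClosure v k {x₀} y) (hz : ¬ CrossClosure v k {x₀} z) :
      v l z ≠ v l y := fun heq => hz (hinj l heq ▸ hy)
  have hxx₀ : v 1 x < v 1 x₀ := (htop x).lt_of_ne (hne hx₀ hx)
  induction l, hl using Nat.le_induction generalizing u x with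
  | base =>
    by_contra! h
    have hux := h.lt_of_ne (hne hu hx).symm
    rcases (Nat.succ_le_of_lt hlk).lt_or_eq with hk | hk
    · -- By closure, `x` stays above every member, although it started below `x₀`.
      have hx₀x : v 2 x₀ < v 2 x := by
        by_contra! h'
        exact hx (cross le_rfl hlk hu hx₀ hux (h'.lt_of_ne (hne hx₀ hx)))
      exact (lt_succ_of_rebounds hv hinj le_rfl hk hx₀ hx hxx₀).not_gt hx₀x
    · exact hxx₀.not_gt (eq_of_le_two hu hk.ge htop ▸ hux)
  | succ l hl ih => exact lt_succ_of_rebounds hv hinj hl hlk hu hx (ih (by omega) hu hx hxx₀)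

end CrossClosure

end Rebounds

section Votes

variable {α : Type*}

theorem score_append (sc : ℕ → ℤ) (P Q : List (α → ℕ)) (c : α) :
    score sc (P ++ Q) c = score sc P c + score sc Q c := by
  simp [score]

/-- The sort key of the social ranking `swf sc tb P`: the score, and for equal scores the
tie-breaking order, negated because smaller `tb`-values are preferred.  The lexicographic product
makes the keys elements of an ordered group, to which the points of a vote can be added. -/
def tieKey (sc : ℕ → ℤ) (tb : α → ℕ) (P : List (α → ℕ)) (c : α) : ℤ ×ₗ ℤ :=
  toLex (score sc P c, -(tb c : ℤ))

theorem tieKey_injective {tb : α → ℕ} (htb : Function.Injective tb) (sc : ℕ → ℤ)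
    (P : List (α → ℕ)) : Function.Injective (tieKey sc tb P) := fun x y hxy => by
  have h : -(tb x : ℤ) = -(tb y : ℤ) := congrArg (fun z => (ofLex z).2) hxy
  exact htb (by omega)

variable [Fintype α]

theorem swf_eq_numAbove (sc : ℕ → ℤ) (tb : α → ℕ) (P : List (α → ℕ)) :
    swf sc tb P = numAbove univ fun c => OrderDual.toDual (tieKey sc tb P c) := by
  funext c
  simp [swf, numAbove, tieKey, Prod.Lex.toLex_lt_toLex]

theorem swf_lt_iff {sc : ℕ → ℤ} {tb : α → ℕ} {P : List (α → ℕ)} {x y : α} :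
    swf sc tb P x < swf sc tb P y ↔ tieKey sc tb P x < tieKey sc tb P y := by
  rw [swf_eq_numAbove, numAbove_lt_iff (mem_univ x), OrderDual.toDual_lt_toDual]

theorem numAbove_swf (S : Finset α) (sc : ℕ → ℤ) (tb : α → ℕ) (P : List (α → ℕ)) :
    numAbove S (swf sc tb P) = numAbove S (tieKey sc tb P) := by
  funext x
  simp only [numAbove, swf_lt_iff]

theorem score_le_of_swf_le {sc : ℕ → ℤ} {tb : α → ℕ} {P : List (α → ℕ)} {x y : α}
    (h : swf sc tb P x ≤ swf sc tb P y) : score sc P x ≤ score sc P y := by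
  rw [← not_lt, swf_lt_iff, not_lt] at h
  exact Prod.Lex.monotone_fst _ _ h

theorem isVote_swf {tb : α → ℕ} (htb : Function.Injective tb) (sc : ℕ → ℤ) (P : List (α → ℕ)) :
    IsVote (swf sc tb P) := by
  rw [swf_eq_numAbove]
  refine ⟨?_, fun c => numAbove_lt_card _ (mem_univ c)⟩
  rw [← Set.injOn_univ, ← coe_univ]
  exact injOn_numAbove (OrderDual.toDual.injective.comp (tieKey_injective htb sc P)).injOn

theorem IsVote.exists_eq {q : α → ℕ} (hq : IsVote q) {j : ℕ} (hj : j < Fintype.card α) :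
    ∃ x, q x = j := by
  have hmem : j ∈ univ.image q := by
    rwa [image_eq_range_of_injOn hq.1.injOn fun x _ => hq.2 x, mem_range]
  simpa using hmem

variable [DecidableEq α]

theorem buildVote_of_mem {H : Finset α} {x : α} (r : α → ℕ) (hx : x ∈ H) :
    buildVote r H x = Fintype.card α - #H + numAbove H r x :=
  if_pos hx

theorem buildVote_of_notMem {H : Finset α} {x : α} (r : α → ℕ) (hx : x ∉ H) :
    buildVote r H x = numAbove Hᶜ r x := by
  rw [buildVote, if_neg hx, numAbove]
  congr 1
  ext
  simp

theorem buildVote_lt_of_notMem_of_mem {H : Finset α} {x y : α} (r : α → ℕ) (hx : x ∉ H)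
    (hy : y ∈ H) : buildVote r H x < buildVote r H y := by
  rw [buildVote_of_mem r hy, buildVote_of_notMem r hx, ← card_compl]
  exact (numAbove_lt_card r (mem_compl.2 hx)).trans_le (Nat.le_add_right _ _)

theorem buildVote_lt_iff {H : Finset α} {x y : α} (r : α → ℕ) (hxy : x ∈ H ↔ y ∈ H) :
    buildVote r H x < buildVote r H y ↔ r y < r x := by
  by_cases hx : x ∈ H
  · rw [buildVote_of_mem r hx, buildVote_of_mem r (hxy.1 hx), Nat.add_lt_add_iff_left,
      numAbove_lt_iff hx]
  · rw [buildVote_of_notMem r hx, buildVote_of_notMem r (mt hxy.2 hx),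
      numAbove_lt_iff (mem_compl.2 hx)]

theorem isVote_buildVote {r : α → ℕ} (hr : Function.Injective r) (H : Finset α) :
    IsVote (buildVote r H) := by
  constructor
  · intro x y hxy
    have hside : x ∈ H ↔ y ∈ H := by
      by_contra h
      rcases not_iff.1 h with h
      by_cases hy : y ∈ H
      · exact (buildVote_lt_of_notMem_of_mem r (by tauto) hy).ne hxy
      · exact (buildVote_lt_of_notMem_of_mem r hy (by tauto)).ne' hxy
    exact hr (le_antisymm (not_lt.1 ((buildVote_lt_iff r hside).not.1 hxy.not_lt))
      (not_lt.1 ((buildVote_lt_iff r hside.symm).not.1 hxy.not_gt)))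
  · intro x
    by_cases hx : x ∈ H
    · have := numAbove_lt_card r hx
      have := card_le_univ H
      rw [buildVote_of_mem r hx]
      omega
    · rw [buildVote_of_notMem r hx]
      exact (numAbove_lt_card r (mem_compl.2 hx)).trans_le (card_le_univ _)

end Votes

section Stages

variable {α : Type*} [Fintype α] [DecidableEq α] {tb : α → ℕ} {P : List (α → ℕ)} {H : Finset α}

theorem stageProfile_eq_map (sc : ℕ → ℤ) (tb : α → ℕ) (P : List (α → ℕ)) (H : Finset α) (n : ℕ) :
    stageProfile sc tb P H n = (List.range n).map fun l => stageVote sc tb P H (l + 1) := by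
  induction n with
  | zero => rfl
  | succ n ih => rw [List.range_succ, List.map_append, ← ih]; rfl

theorem isVote_stageVote (htb : Function.Injective tb) (sc : ℕ → ℤ) (l : ℕ) :
    IsVote (stageVote sc tb P H l) :=
  isVote_buildVote (isVote_swf htb sc _).1 H

/-- The sort key of the social ranking after `n` stages of Algorithm 2 with the Borda rule. -/
def stageKey (tb : α → ℕ) (P : List (α → ℕ)) (H : Finset α) (n : ℕ) : α → ℤ ×ₗ ℤ :=
  tieKey bordaVec tb (P ++ stageProfile bordaVec tb P H n)

theorem stageVote_lt_iff {n : ℕ} {x y : α} (hxy : x ∈ H ↔ y ∈ H) :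
    stageVote bordaVec tb P H (n + 1) x < stageVote bordaVec tb P H (n + 1) y ↔
      stageKey tb P H n y < stageKey tb P H n x :=
  (buildVote_lt_iff _ hxy).trans swf_lt_iff

theorem stageKey_succ (n : ℕ) (x : α) :
    stageKey tb P H (n + 1) x =
      stageKey tb P H n x + stageVote bordaVec tb P H (n + 1) x • toLex (1, 0) := by
  have h : stageProfile bordaVec tb P H (n + 1) =
      stageProfile bordaVec tb P H n ++ [stageVote bordaVec tb P H (n + 1)] := rfl
  simp only [stageKey, tieKey, h, ← List.append_assoc, score_append _ (_ ++ _)]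
  apply ofLex.injective
  ext <;> simp [score, bordaVec]

theorem reverseStep_stageKey (n : ℕ) :
    ReverseStep H (toLex (1, 0)) ((Fintype.card α - #H) • toLex (1, 0))
      (stageKey tb P H n) (stageKey tb P H (n + 1)) := fun x hx => by
  rw [stageKey_succ, stageVote, buildVote_of_mem _ hx, numAbove_swf, add_comm (_ - _), add_smul,
    add_assoc]
  rfl

theorem reverseStep_compl_stageKey (n : ℕ) :
    ReverseStep Hᶜ (toLex (1, 0)) 0 (stageKey tb P H n) (stageKey tb P H (n + 1)) := fun x hx => by
  rw [stageKey_succ, stageVote, buildVote_of_notMem _ (mem_compl.1 hx), numAbove_swf, add_zero]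
  rfl

theorem rebounds_stageVote (htb : Function.Injective tb) (P : List (α → ℕ)) (H : Finset α) :
    Rebounds (stageVote bordaVec tb P H) := by
  intro p l u w hl hpu hpw hwu huw
  obtain ⟨n, rfl⟩ := Nat.exists_eq_add_of_le' hl
  have hside : u ∈ H ↔ w ∈ H := by
    by_cases hw : w ∈ H <;> by_cases hu : u ∈ H
    · simp only [hu, hw]
    · exact absurd hwu (buildVote_lt_of_notMem_of_mem _ hu hw).not_gt
    · exact absurd huw (buildVote_lt_of_notMem_of_mem _ hw hu).not_gt
    · simp only [hu, hw]
  have hinj : Function.Injective (stageKey tb P H n) := tieKey_injective htb _ _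
  have he : (0 : ℤ ×ₗ ℤ) ≤ toLex (1, 0) := by decide
  rw [stageVote_lt_iff hside.symm] at hwu
  rw [stageVote_lt_iff hside] at huw
  obtain ⟨S, hu, hw, hSH, C, hS⟩ : ∃ S : Finset α, u ∈ S ∧ w ∈ S ∧
      (∀ x ∈ S, ∀ y ∈ S, x ∈ H ↔ y ∈ H) ∧ ∃ C, ∀ n,
        ReverseStep S (toLex (1, 0)) C (stageKey tb P H n) (stageKey tb P H (n + 1)) := by
    by_cases hu : u ∈ H
    · exact ⟨H, hu, hside.1 hu, fun x hx y hy => iff_of_true hx hy, _, reverseStep_stageKey⟩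
    · exact ⟨Hᶜ, mem_compl.2 hu, mem_compl.2 (mt hside.2 hu),
        fun x hx y hy => iff_of_false (mem_compl.1 hx) (mem_compl.1 hy), _,
        reverseStep_compl_stageKey⟩
  obtain ⟨s, hs, t, ht, hps, hpt, hst, hts⟩ :=
    exists_swap_back he hinj.injOn (hS n) (hS (n + 1)) hu hw hpu hpw hwu huw
  exact ⟨s, t, hps, hpt, (stageVote_lt_iff (hSH t ht s hs)).2 hst,
    (stageVote_lt_iff (hSH s hs t ht)).2 hts⟩

end Stages

section ExtremeSets

variable {α : Type*}

theorem exists_botWithin_one_eq_singleton {S : Finset α} {r : α → ℕ}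
    (hr : Function.Injective r) (hS : S.Nonempty) :
    ∃ x₀ ∈ S, botWithin r S 1 = {x₀} ∧ ∀ x ∈ S, r x₀ ≤ r x := by
  obtain ⟨x₀, hx₀, hmin⟩ := exists_min_image S r hS
  refine ⟨x₀, hx₀, eq_singleton_iff_unique_mem.2 ⟨?_, fun x hx => ?_⟩, hmin⟩
  · simpa [botWithin, hx₀, filter_eq_empty_iff] using hmin
  · simp only [botWithin, mem_filter, Nat.lt_one_iff, card_eq_zero, filter_eq_empty_iff,
      not_lt] at hx
    exact hr ((hx.2 hx₀).antisymm (hmin x hx.1))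

theorem exists_topWithin_one_eq_singleton {S : Finset α} {r : α → ℕ}
    (hr : Function.Injective r) (hS : S.Nonempty) :
    ∃ x₀ ∈ S, topWithin r S 1 = {x₀} ∧ ∀ x ∈ S, r x ≤ r x₀ := by
  obtain ⟨x₀, hx₀, hmax⟩ := exists_max_image S r hS
  refine ⟨x₀, hx₀, eq_singleton_iff_unique_mem.2 ⟨?_, fun x hx => ?_⟩, hmax⟩
  · simpa [topWithin, hx₀, filter_eq_empty_iff] using hmax
  · simp only [topWithin, mem_filter, Nat.lt_one_iff, card_eq_zero, filter_eq_empty_iff,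
      not_lt] at hx
    exact hr ((hmax x hx.1).antisymm (hx.2 hx₀))

variable [Fintype α] [DecidableEq α] {tb : α → ℕ} {P : List (α → ℕ)} {H : Finset α}

theorem stageVote_one (sc : ℕ → ℤ) (tb : α → ℕ) (P : List (α → ℕ)) (H : Finset α) :
    stageVote sc tb P H 1 = buildVote (swf sc tb P) H := by
  simp [stageVote, stageProfile]

theorem mem_Uset_iff {sc : ℕ → ℤ} {pt : α → ℕ} {k : ℕ} {u : α} :
    u ∈ Uset sc tb P pt H k ↔
      CrossClosure (stageVote sc tb P H) k (botWithin pt H 1) u := by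
  simp only [Uset, mem_filter, mem_univ, true_and]
  exact (CrossClosure.iff_exists_mem_iterate rfl (by simp [Uaux])).symm

theorem mem_Dset_iff {sc : ℕ → ℤ} {pt : α → ℕ} {k : ℕ} {d : α} :
    d ∈ Dset sc tb P pt H k ↔
      CrossClosure (fun l x => OrderDual.toDual (stageVote sc tb P H l x)) k
        (topWithin pt (univ \ H) 1) d := by
  simp only [Dset, mem_filter, mem_univ, true_and]
  exact (CrossClosure.iff_exists_mem_iterate rfl (by simp [Daux])).symm

theorem Uset_subset (sc : ℕ → ℤ) (tb : α → ℕ) (P : List (α → ℕ)) (pt : α → ℕ) (H : Finset α)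
    (k : ℕ) : Uset sc tb P pt H k ⊆ H := fun _ hu =>
  (mem_Uset_iff.1 hu).mem_of_forall_lt (filter_subset _ _)
    fun _ _ _ hx _ hy => buildVote_lt_of_notMem_of_mem _ hx hy

theorem Dset_subset (sc : ℕ → ℤ) (tb : α → ℕ) (P : List (α → ℕ)) (pt : α → ℕ) (H : Finset α)
    (k : ℕ) : Dset sc tb P pt H k ⊆ univ \ H := fun _ hd =>
  (mem_Dset_iff.1 hd).mem_of_forall_lt (filter_subset _ _)
    fun _ _ _ hx _ hy => buildVote_lt_of_notMem_of_mem _ (mem_sdiff.1 hy).2 (by simpa using hx)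

theorem Uset_nonempty (sc : ℕ → ℤ) (tb : α → ℕ) (P : List (α → ℕ)) {pt : α → ℕ}
    (hpt : Function.Injective pt) (hH : H.Nonempty) (k : ℕ) : (Uset sc tb P pt H k).Nonempty := by
  obtain ⟨u₀, -, hbot, -⟩ := exists_botWithin_one_eq_singleton hpt hH
  exact ⟨u₀, mem_Uset_iff.2 (.base (by simp [hbot]))⟩

theorem stageVote_lt_of_mem_Uset (htb : Function.Injective tb) {k l : ℕ} (hl : 1 ≤ l) (hlk : l < k)
    {u x : α} (hu : u ∈ Uset bordaVec tb P (swf bordaVec tb P) H k)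
    (hx : x ∉ Uset bordaVec tb P (swf bordaVec tb P) H k) :
    stageVote bordaVec tb P H l x < stageVote bordaVec tb P H l u := by
  obtain ⟨u₀, hu₀, hbot, hmin⟩ := exists_botWithin_one_eq_singleton
    (isVote_swf htb bordaVec P).1 ⟨u, Uset_subset _ _ _ _ _ _ hu⟩
  have htop (y : α) : stageVote bordaVec tb P H 1 y ≤ stageVote bordaVec tb P H 1 u₀ := by
    rw [stageVote_one]
    by_cases hy : y ∈ H
    · exact not_lt.1 ((buildVote_lt_iff _ (iff_of_true hu₀ hy)).not.2 (hmin y hy).not_gt)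
    · exact (buildVote_lt_of_notMem_of_mem _ hy hu₀).le
  rw [mem_Uset_iff, hbot] at hu hx
  exact CrossClosure.lt_of_not (rebounds_stageVote htb P H)
    (fun l => (isVote_stageVote htb bordaVec l).1) htop hl hlk hu hx

theorem stageVote_lt_of_mem_Dset (htb : Function.Injective tb) {k l : ℕ} (hl : 1 ≤ l) (hlk : l < k)
    {d x : α} (hd : d ∈ Dset bordaVec tb P (swf bordaVec tb P) H k)
    (hx : x ∉ Dset bordaVec tb P (swf bordaVec tb P) H k) :
    stageVote bordaVec tb P H l d < stageVote bordaVec tb P H l x := by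
  obtain ⟨d₀, hd₀, htop, hmax⟩ := exists_topWithin_one_eq_singleton
    (isVote_swf htb bordaVec P).1 ⟨d, Dset_subset _ _ _ _ _ _ hd⟩
  have hd₀H : d₀ ∉ H := (mem_sdiff.1 hd₀).2
  have hbot (y : α) : stageVote bordaVec tb P H 1 d₀ ≤ stageVote bordaVec tb P H 1 y := by
    rw [stageVote_one]
    by_cases hy : y ∈ H
    · exact (buildVote_lt_of_notMem_of_mem _ hd₀H hy).le
    · exact not_lt.1 ((buildVote_lt_iff _ (iff_of_false hy hd₀H)).not.2
        (hmax y (by simp [hy])).not_gt)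
  rw [mem_Dset_iff, htop] at hd hx
  exact OrderDual.toDual_lt_toDual.1 <| CrossClosure.lt_of_not (rebounds_stageVote htb P H).toDual
    (fun l => OrderDual.toDual.injective.comp (isVote_stageVote htb bordaVec l).1) hbot hl hlk hd hx

end ExtremeSets

section Sums

variable {α M : Type*} [AddCommMonoid M] [LinearOrder M] [IsOrderedAddMonoid M]

theorem sum_le_sum_of_card_eq [DecidableEq α] {A B : Finset α} {g : α → M} (hcard : #A = #B)
    (h : ∀ a ∈ A \ B, ∀ b ∈ B \ A, g a ≤ g b) : ∑ a ∈ A, g a ≤ ∑ b ∈ B, g b := by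
  rw [← sum_inter_add_sum_sdiff A B, ← sum_inter_add_sum_sdiff B A, inter_comm B A]
  have hsd : #(A \ B) = #(B \ A) := card_sdiff_comm hcard
  gcongr 1
  rcases (B \ A).eq_empty_or_nonempty with hBA | hBA
  · rw [hBA, card_empty, card_eq_zero] at hsd
    rw [hsd, hBA]
  · obtain ⟨b, hb, hbmin⟩ := exists_min_image (B \ A) g hBA
    calc ∑ a ∈ A \ B, g a ≤ #(A \ B) • g b := sum_le_card_nsmul _ _ _ fun a ha => h a ha b hb
      _ = #(B \ A) • g b := by rw [hsd]
      _ ≤ ∑ b ∈ B \ A, g b := card_nsmul_le_sum _ _ _ hbmin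

theorem exists_subset_card_eq_sum_le [DecidableEq α] {H G U : Finset α} {g : α → M}
    (hcard : #G = #H) (hg : ∀ x ∈ G \ H, ∀ y ∈ H \ G, g x ≤ g y) (hU : U ⊆ H) :
    ∃ U' ⊆ G, #U' = #U ∧ ∑ c ∈ U', g c ≤ ∑ c ∈ U, g c := by
  have hsd : #(U \ G) ≤ #(G \ H) :=
    (card_le_card (sdiff_subset_sdiff hU subset_rfl)).trans_eq (card_sdiff_comm hcard).symm
  obtain ⟨E, hE, hEcard⟩ := exists_subset_card_eq hsd
  have hdisj : Disjoint (U ∩ G) E := disjoint_left.2 fun x hx hxE =>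
    (mem_sdiff.1 (hE hxE)).2 (hU (mem_inter.1 hx).1)
  have hcard' : #(U ∩ G ∪ E) = #U := by
    rw [card_union_of_disjoint hdisj, hEcard, card_inter_add_card_sdiff]
  refine ⟨U ∩ G ∪ E, union_subset inter_subset_right (hE.trans sdiff_subset), hcard',
    sum_le_sum_of_card_eq hcard' fun x hx y hy => ?_⟩
  simp only [mem_sdiff, mem_union, mem_inter] at hx hy
  exact hg x (hE (by tauto)) y (mem_sdiff.2 ⟨hU hy.1, by tauto⟩)

theorem avg_le_avg_of_forall_le {A B : Finset α} {f : α → ℚ} (hA : A.Nonempty) (hB : B.Nonempty)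
    (h : ∀ a ∈ A, ∀ b ∈ B, f a ≤ f b) : (∑ a ∈ A, f a) / #A ≤ (∑ b ∈ B, f b) / #B := by
  rw [← expect_eq_sum_div_card, ← expect_eq_sum_div_card]
  exact expect_le hA fun a ha => le_expect hB fun b hb => h a ha b hb

end Sums

section ScoreSums

variable {α : Type*} {sc : ℕ → ℤ} {A B : Finset α}

theorem sum_score_le_sum_score {Q R : List (α → ℕ)} (hlen : Q.length = R.length)
    (h : ∀ q ∈ Q, ∀ r ∈ R, ∑ a ∈ A, sc (q a) ≤ ∑ b ∈ B, sc (r b)) :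
    ∑ a ∈ A, score sc Q a ≤ ∑ b ∈ B, score sc R b := by
  induction Q generalizing R with
  | nil => simp [List.length_eq_zero_iff.1 hlen.symm, score]
  | cons q Q ih =>
    obtain ⟨r, R, rfl⟩ := List.exists_cons_of_length_eq_add_one hlen.symm
    have hQR := ih (R := R) (by simpa using hlen) fun q' hq' r' hr' =>
      h q' (by simp [hq']) r' (by simp [hr'])
    have hqr := h q (by simp) r (by simp)
    simp only [score, List.map_cons, List.sum_cons, sum_add_distrib] at hQR ⊢
    exact add_le_add hqr hQR

theorem score_bordaVec_nonneg (P : List (α → ℕ)) (c : α) : 0 ≤ score bordaVec P c :=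
  List.sum_nonneg fun n hn => by
    obtain ⟨q, -, rfl⟩ := List.mem_map.1 hn
    exact Int.natCast_nonneg _

theorem monotone_bordaVec : Monotone bordaVec := Nat.mono_cast

variable [Fintype α] {q r : α → ℕ}

theorem IsVote.sum_le_sum_of_top (hq : IsVote q) (hr : IsVote r) (hsc : Monotone sc)
    (hcard : #A = #B) (htop : ∀ b ∈ B, ∀ x ∉ B, r x < r b) :
    ∑ a ∈ A, sc (q a) ≤ ∑ b ∈ B, sc (r b) := by
  rw [← sum_image (f := sc) hq.1.injOn, ← sum_image (f := sc) hr.1.injOn]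
  refine sum_le_sum_of_card_eq ?_ fun i hi j hj => hsc ?_
  · rw [card_image_of_injective _ hq.1, card_image_of_injective _ hr.1, hcard]
  · obtain ⟨⟨a, -, rfl⟩, hiB⟩ := (mem_sdiff.1 hi).imp_left mem_image.1
    obtain ⟨b, hb, rfl⟩ := mem_image.1 (mem_sdiff.1 hj).1
    obtain ⟨x, hx⟩ := hr.exists_eq (hq.2 a)
    exact hx ▸ (htop b hb x fun hxB => hiB (mem_image.2 ⟨x, hxB, hx⟩)).le

theorem IsVote.sum_le_sum_of_bot (hq : IsVote q) (hr : IsVote r) (hsc : Monotone sc)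
    (hcard : #A = #B) (hbot : ∀ b ∈ B, ∀ x ∉ B, r b < r x) :
    ∑ b ∈ B, sc (r b) ≤ ∑ a ∈ A, sc (q a) := by
  classical
  have htotal : ∑ x, sc (r x) ≤ ∑ x, sc (q x) := hr.sum_le_sum_of_top hq hsc rfl (by simp)
  have hcompl : ∑ a ∈ Aᶜ, sc (q a) ≤ ∑ b ∈ Bᶜ, sc (r b) :=
    hq.sum_le_sum_of_top hr hsc (by rw [card_compl, card_compl, hcard])
      fun x hx b hb => hbot b (by simpa using hb) x (by simpa using hx)
  rw [← sum_add_sum_compl B fun c => sc (r c), ← sum_add_sum_compl A fun c => sc (q c)] at htotal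
  linarith

end ScoreSums

section Coalition

variable {α : Type*} [Fintype α] [DecidableEq α] {tb : α → ℕ} {P Q : List (α → ℕ)}
  {H A : Finset α} {k : ℕ}

theorem sum_score_le_sum_stageProfile (htb : Function.Injective tb) (hQ : ∀ q ∈ Q, IsVote q)
    (hlen : Q.length = k - 1) (hcard : #A = #(Uset bordaVec tb P (swf bordaVec tb P) H k)) :
    ∑ a ∈ A, score bordaVec Q a ≤ ∑ u ∈ Uset bordaVec tb P (swf bordaVec tb P) H k,
      score bordaVec (stageProfile bordaVec tb P H (k - 1)) u := by
  rw [stageProfile_eq_map]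
  refine sum_score_le_sum_score (by simpa using hlen) fun q hq r hr => ?_
  obtain ⟨l, hl, rfl⟩ := List.mem_map.1 hr
  have hlk : l + 1 < k := by have := List.mem_range.1 hl; omega
  exact (hQ q hq).sum_le_sum_of_top (isVote_stageVote htb _ _) monotone_bordaVec hcard
    fun u hu x hx => stageVote_lt_of_mem_Uset htb (by omega) hlk hu hx

theorem sum_stageProfile_le_sum_score (htb : Function.Injective tb) (hQ : ∀ q ∈ Q, IsVote q)
    (hlen : Q.length = k - 1) (hcard : #A = #(Dset bordaVec tb P (swf bordaVec tb P) H k)) :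
    ∑ d ∈ Dset bordaVec tb P (swf bordaVec tb P) H k,
      score bordaVec (stageProfile bordaVec tb P H (k - 1)) d ≤ ∑ a ∈ A, score bordaVec Q a := by
  rw [stageProfile_eq_map]
  refine sum_score_le_sum_score (by simpa using hlen.symm) fun r hr q hq => ?_
  obtain ⟨l, hl, rfl⟩ := List.mem_map.1 hr
  have hlk : l + 1 < k := by have := List.mem_range.1 hl; omega
  exact (hQ q hq).sum_le_sum_of_bot (isVote_stageVote htb _ _) monotone_bordaVec hcard
    fun d hd x hx => stageVote_lt_of_mem_Dset htb (by omega) hlk hd hx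

theorem exists_subset_sum_le_sum_Uset {G : Finset α} (htb : Function.Injective tb)
    (hcard : #G = #H)
    (hGH : ∀ x ∈ G \ H, ∀ y ∈ H \ G, score bordaVec P x ≤ score bordaVec P y)
    (hQ : ∀ q ∈ Q, IsVote q) (hlen : Q.length = k - 1) :
    ∃ A ⊆ G, #A = #(Uset bordaVec tb P (swf bordaVec tb P) H k) ∧
      ∑ a ∈ A, score bordaVec (P ++ Q) a ≤ ∑ u ∈ Uset bordaVec tb P (swf bordaVec tb P) H k,
        score bordaVec (P ++ stageProfile bordaVec tb P H (k - 1)) u := by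
  obtain ⟨A, hAG, hAcard, hAsum⟩ :=
    exists_subset_card_eq_sum_le hcard hGH (Uset_subset bordaVec tb P (swf bordaVec tb P) H k)
  refine ⟨A, hAG, hAcard, ?_⟩
  simp only [score_append, sum_add_distrib]
  exact add_le_add hAsum (sum_score_le_sum_stageProfile htb hQ hlen hAcard)

theorem exists_subset_sum_Dset_le_sum {G : Finset α} (htb : Function.Injective tb)
    (hcard : #G = #H)
    (hGH : ∀ x ∈ G \ H, ∀ y ∈ H \ G, score bordaVec P x ≤ score bordaVec P y)
    (hQ : ∀ q ∈ Q, IsVote q) (hlen : Q.length = k - 1) :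
    ∃ A ⊆ univ \ G, #A = #(Dset bordaVec tb P (swf bordaVec tb P) H k) ∧
      ∑ d ∈ Dset bordaVec tb P (swf bordaVec tb P) H k,
        score bordaVec (P ++ stageProfile bordaVec tb P H (k - 1)) d ≤
      ∑ a ∈ A, score bordaVec (P ++ Q) a := by
  obtain ⟨A, hAG, hAcard, hAsum⟩ := exists_subset_card_eq_sum_le (G := univ \ G)
    (g := fun c => -score bordaVec P c) (by rw [card_univ_sdiff, card_univ_sdiff, hcard])
    (fun x hx y hy => neg_le_neg (hGH y (by simp_all) x (by simp_all)))
    (Dset_subset bordaVec tb P (swf bordaVec tb P) H k)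
  refine ⟨A, hAG, hAcard, ?_⟩
  simp only [sum_neg_distrib, neg_le_neg_iff] at hAsum
  simp only [score_append, sum_add_distrib]
  exact add_le_add hAsum (sum_stageProfile_le_sum_score htb hQ hlen hAcard)

theorem avg_Dset_le_avg_Uset {G : Finset α} (htb : Function.Injective tb) (hH : H.Nonempty)
    (hcard : #G = #H)
    (hGH : ∀ x ∈ G \ H, ∀ y ∈ H \ G, score bordaVec P x ≤ score bordaVec P y)
    (hQ : ∀ q ∈ Q, IsVote q) (hlen : Q.length = k - 1)
    (hG : ∀ x ∉ G, ∀ y ∈ G, score bordaVec (P ++ Q) x ≤ score bordaVec (P ++ Q) y) :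
    (∑ d ∈ Dset bordaVec tb P (swf bordaVec tb P) H k,
        (score bordaVec (P ++ stageProfile bordaVec tb P H (k - 1)) d : ℚ)) /
        (#(Dset bordaVec tb P (swf bordaVec tb P) H k) : ℚ) ≤
      (∑ u ∈ Uset bordaVec tb P (swf bordaVec tb P) H k,
        (score bordaVec (P ++ stageProfile bordaVec tb P H (k - 1)) u : ℚ)) /
        (#(Uset bordaVec tb P (swf bordaVec tb P) H k) : ℚ) := by
  have hUne : (Uset bordaVec tb P (swf bordaVec tb P) H k).Nonempty :=
    Uset_nonempty _ _ _ (isVote_swf htb bordaVec P).1 hH k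
  obtain ⟨U', hU'G, hU'card, hU'sum⟩ :=
    exists_subset_sum_le_sum_Uset htb hcard hGH hQ hlen
  obtain ⟨D', hD'G, hD'card, hD'sum⟩ :=
    exists_subset_sum_Dset_le_sum htb hcard hGH hQ hlen
  set R := stageProfile bordaVec tb P H (k - 1)
  set U := Uset bordaVec tb P (swf bordaVec tb P) H k
  set D := Dset bordaVec tb P (swf bordaVec tb P) H k
  rcases D.eq_empty_or_nonempty with hD₀ | hDne
  · -- The average over the empty set is `0 / 0 = 0`.
    have hnonneg (c : α) : (0 : ℚ) ≤ score bordaVec (P ++ R) c :=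
      mod_cast score_bordaVec_nonneg _ c
    rw [hD₀, sum_empty, zero_div]
    exact div_nonneg (sum_nonneg fun u _ => hnonneg u) (Nat.cast_nonneg _)
  calc (∑ d ∈ D, (score bordaVec (P ++ R) d : ℚ)) / #D
      ≤ (∑ d ∈ D', (score bordaVec (P ++ Q) d : ℚ)) / #D' := by
        rw [hD'card]; gcongr; exact_mod_cast hD'sum
    _ ≤ (∑ u ∈ U', (score bordaVec (P ++ Q) u : ℚ)) / #U' := by
        refine avg_le_avg_of_forall_le (card_pos.1 (hD'card ▸ hDne.card_pos))
          (card_pos.1 (hU'card ▸ hUne.card_pos)) fun d hd u hu => ?_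
        exact_mod_cast hG d (mem_sdiff.1 (hD'G hd)).2 u (hU'G hu)
    _ ≤ (∑ u ∈ U, (score bordaVec (P ++ R) u : ℚ)) / #U := by
        rw [hU'card]; gcongr; exact_mod_cast hU'sum

end Coalition

section RationalCompromise

variable {α : Type*} {pt po r : α → ℕ} {p : α} {i : ℕ}

theorem card_topWithin (hr : Function.Injective r) {S : Finset α} {n : ℕ}
    (hn : n ≤ #S) : #(topWithin r S n) = n := by
  have hrange : {j ∈ range #S | j < n} = range n := by grind
  calc #(topWithin r S n) = #{j ∈ range #S | j < n} :=
        card_filter_comp_of_injOn (injOn_numAbove hr.injOn) (fun _ => numAbove_lt_card r) (· < n)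
    _ = n := by rw [hrange, card_range]

theorem le_of_notMem_topWithin {S : Finset α} {n : ℕ} {x y : α}
    (hx : x ∈ S) (hx' : x ∉ topWithin r S n) (hy : y ∈ topWithin r S n) : r x ≤ r y := by
  by_contra! h
  exact hx' (mem_filter.2 ⟨hx, (numAbove_le_numAbove S h.le).trans_lt (mem_filter.1 hy).2⟩)

variable [Fintype α]

theorem IsVote.card_topSet (hr : IsVote r) (hi : i ≤ Fintype.card α) : #(topSet r i) = i := by
  have hrange : {j ∈ range (Fintype.card α) | Fintype.card α - i ≤ j} =
      Ico (Fintype.card α - i) (Fintype.card α) := by grind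
  rw [topSet, card_filter_comp_of_injOn hr.1.injOn (fun x _ => hr.2 x) (Fintype.card α - i ≤ ·),
    card_univ, hrange, Nat.card_Ico]
  omega

variable [DecidableEq α]

theorem rcIndex_bounds (hr : IsVote r) (hpo : IsVote po) (h : RC r po = {p}) :
    1 ≤ rcIndex r po ∧ 2 * rcIndex r po ≤ Fintype.card α + 1 := by
  have hmem : Fintype.card α ∈ {j | 1 ≤ j ∧ (topSet r j ∩ topSet po j).Nonempty} :=
    ⟨Fintype.card_pos_iff.2 ⟨p⟩, p, by simp [topSet]⟩
  have hle : rcIndex r po ≤ Fintype.card α := Nat.sInf_le hmem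
  refine ⟨(Nat.sInf_mem ⟨_, hmem⟩).1, ?_⟩
  have hunion := card_union_add_card_inter (topSet r (rcIndex r po)) (topSet po (rcIndex r po))
  rw [hr.card_topSet hle, hpo.card_topSet hle, ← RC, h, card_singleton] at hunion
  have huniv := card_le_univ (topSet r (rcIndex r po) ∪ topSet po (rcIndex r po))
  omega

theorem card_Hset (hpt : Function.Injective pt) (hpo : IsVote po) (hp : p ∈ topSet po i)
    (hi : 1 ≤ i) (hi' : 2 * i ≤ Fintype.card α + 1) : #(Hset pt po p i) = i := by
  have hcard : #((univ \ topSet po i).erase p) = Fintype.card α - i := by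
    rw [erase_eq_of_notMem (by simp [hp]), card_univ_sdiff, hpo.card_topSet (by omega)]
  rw [Hset, card_insert_of_notMem (by simp [topWithin]), card_topWithin hpt (by omega)]
  omega

theorem le_of_mem_topSet_sdiff_Hset (hp : topSet r i ∩ topSet po i = {p}) {x y : α}
    (hx : x ∈ topSet r i \ Hset pt po p i) (hy : y ∈ Hset pt po p i \ topSet r i) :
    pt x ≤ pt y := by
  obtain ⟨hxr, hxH⟩ := mem_sdiff.1 hx
  obtain ⟨hyH, hyr⟩ := mem_sdiff.1 hy
  obtain ⟨hxp, hxT⟩ := not_or.1 (mem_insert.not.1 hxH)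
  have hpr : p ∈ topSet r i := (mem_inter.1 (hp ▸ mem_singleton_self p)).1
  have hxpo : x ∉ topSet po i := fun h => hxp (mem_singleton.1 (hp ▸ mem_inter.2 ⟨hxr, h⟩))
  have hyT := (mem_insert.1 hyH).resolve_left fun h => hyr (h ▸ hpr)
  exact le_of_notMem_topWithin (by simp [hxp, hxpo]) hxT hyT

end RationalCompromise

/-- Lemma 9: run Algorithm 2 with the Borda rule and `k` manipulators, and
let `q(U^i)`, `q(D^i)` be the average scores of the members of `U^i`, `D^i` after `k − 1`
stages.  If `q(U^i) < q(D^i)` at every iteration `i ∈ {1, …, ⌈m/2⌉}`, then no profile of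
`k − 1` manipulative Borda votes makes `p` the unique Rational Compromise outcome. -/
theorem lemma9_borda_failure_condition
    (k : ℕ) (hk : 1 ≤ k) (tb : O → ℕ) (P : List (O → ℕ)) (po : O → ℕ) (p : O)
    (htb : Function.Injective tb) (hP : ∀ q ∈ P, IsVote q) (hpo : IsVote po)
    (havg : ∀ i, 1 ≤ i → i ≤ (Fintype.card O + 1) / 2 →
      (∑ u ∈ UsetAlg bordaVec tb P po p i k,
            (stageScoreAlg bordaVec tb P po p i (k - 1) u : ℚ)) /
          ((UsetAlg bordaVec tb P po p i k).card : ℚ) <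
        (∑ d ∈ DsetAlg bordaVec tb P po p i k,
            (stageScoreAlg bordaVec tb P po p i (k - 1) d : ℚ)) /
          ((DsetAlg bordaVec tb P po p i k).card : ℚ)) :
    ¬ ∃ PM : List (O → ℕ), PM.length = k - 1 ∧ (∀ q ∈ PM, IsVote q) ∧
        RC (swf bordaVec tb (P ++ PM)) po = {p} := by
  rintro ⟨PM, hlen, hPM, hRC⟩
  have hvote : IsVote (swf bordaVec tb (P ++ PM)) := isVote_swf htb bordaVec _
  obtain ⟨hi₁, hi₂⟩ := rcIndex_bounds hvote hpo hRC
  unfold RC at hRC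
  set i := rcIndex (swf bordaVec tb (P ++ PM)) po
  have hp : p ∈ topSet po i := (mem_inter.1 (hRC ▸ mem_singleton_self p)).2
  have hcard : #(Hset (swf bordaVec tb P) po p i) = i :=
    card_Hset (isVote_swf htb bordaVec P).1 hpo hp hi₁ hi₂
  refine (havg i hi₁ (by omega)).not_ge (avg_Dset_le_avg_Uset htb ⟨p, mem_insert_self _ _⟩
    ((hvote.card_topSet (by omega)).trans hcard.symm) (fun x hx y hy => ?_) hPM hlen
    (fun x hx y hy => ?_))
  · exact score_le_of_swf_le (le_of_mem_topSet_sdiff_Hset hRC hx hy)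
  · simp only [topSet, mem_filter, mem_univ, true_and, not_le] at hx hy
    exact score_le_of_swf_le (hx.le.trans hy)
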